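/- Let n ≥ 2, let C be a convex subset of the open unit ball B of EuclideanSpace ℝ n which is relatively closed in B and satisfies closedBall(0, r₀) ⊆ C, and let 0 < r₀ < d₂ < d₁ < 1. Let N be the set of unit vectors u such that there exists a unit vector θ with d₁·θ ∈ C and ∠(u, θ) ≤ α_{r₀}(d₁, d₂). Then σ(N) · ∫₀^(artanh d₂) (sinh t)^(n−1) dt ≤ hvol(C). -/

import Mathlib

/-!
Write `A = √(d₁² − r₀²)` and `B = √(d₂² − r₀²)`. In a plane through the origin, the tangent line from
`d₁ θ` to the circle of radius `r₀` touches it at a point `T` and meets the circle of radius `d₂` at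
a point `Q = (B/A) d₁ θ + (1 - B/A) T` whose angle with `θ` is exactly `α = alphaAngle r₀ d₁ d₂`
(`cos_alphaAngle`). If the unit vector `u` makes an angle at most `α` with `θ`, then `d₂ u` is still
within `(1 - B/A) r₀` of `(B/A) d₁ θ`, so it is a convex combination of `d₁ θ` and a point of the
ball of radius `r₀` (`smul_mem_of_angle_le`). Hence every `u ∈ N` satisfies `d₂ u ∈ C`, and `C`
contains the cone over `{u | d₂ u ∈ C} ⊇ N` of radius `d₂`. Integration in polar coordinates
(`toSphere_mul_lintegral_le`) bounds `hvol C` from below by the measure of the base of the cone times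
`∫₀^{d₂} r^{n-1} (1 - r²)^{-(n+1)/2} dr`, and the substitution `r = tanh t` turns this integral
into `∫₀^{artanh d₂} sinh^{n-1} t dt` (`integral_sinh_pow_eq`).
-/

open Metric MeasureTheory InnerProductGeometry

/-- The hyperbolic volume of a subset of the open unit ball in the Klein model of
hyperbolic `n`-space. -/
noncomputable def hvol (n : ℕ) (A : Set (EuclideanSpace ℝ (Fin n))) : ENNReal :=
  ∫⁻ x in A, ENNReal.ofReal ((1 - ‖x‖ ^ 2) ^ (-(((n : ℝ) + 1) / 2)))

/-- Inverse hyperbolic tangent: `artanh d = ½ log((1+d)/(1−d))`. -/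
noncomputable def artanh (d : ℝ) : ℝ := Real.log ((1 + d) / (1 - d)) / 2

/-- The angle `α_{r₀}(r₁, r₂)` of the paper's Definition 1.2 (scale-invariant form). -/
noncomputable def alphaAngle (r₀ r₁ r₂ : ℝ) : ℝ :=
  Real.arcsin (r₀ * (Real.sqrt (r₁ ^ 2 - r₀ ^ 2) - Real.sqrt (r₂ ^ 2 - r₀ ^ 2)) / (r₁ * r₂))

/-- `alphaAngle r₀ r₁ r₂` is the angle `arccos (r₀/r₁) - arccos (r₀/r₂)`; here its cosine is computed
by the addition formula. -/
lemma cos_alphaAngle {r₀ r₁ r₂ : ℝ} (h₀ : 0 < r₀) (h₂ : r₀ < r₂) (h₁ : r₂ < r₁) :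
    Real.cos (alphaAngle r₀ r₁ r₂) =
      (r₀ ^ 2 + Real.sqrt (r₁ ^ 2 - r₀ ^ 2) * Real.sqrt (r₂ ^ 2 - r₀ ^ 2)) / (r₁ * r₂) := by
  have hA := Real.sq_sqrt (show 0 ≤ r₁ ^ 2 - r₀ ^ 2 by nlinarith)
  have hB := Real.sq_sqrt (show 0 ≤ r₂ ^ 2 - r₀ ^ 2 by nlinarith)
  have hA0 := Real.sqrt_nonneg (r₁ ^ 2 - r₀ ^ 2)
  have hB0 := Real.sqrt_nonneg (r₂ ^ 2 - r₀ ^ 2)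
  rw [alphaAngle, Real.cos_arcsin]
  generalize Real.sqrt (r₁ ^ 2 - r₀ ^ 2) = A at *
  generalize Real.sqrt (r₂ ^ 2 - r₀ ^ 2) = B at *
  have p1 : 0 < r₁ := by linarith
  have p2 : 0 < r₂ := by linarith
  have h1 : r₁ ^ 2 = A ^ 2 + r₀ ^ 2 := by linarith
  have h2 : r₂ ^ 2 = B ^ 2 + r₀ ^ 2 := by linarith
  rw [Real.sqrt_eq_iff_mul_self_eq_of_pos (by positivity), div_mul_div_comm, div_pow,
    eq_sub_iff_add_eq, ← sq, ← sq, ← add_div, div_eq_one_iff_eq (by positivity), mul_pow r₁, h1, h2]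
  ring

/-- The convexity step: if `d₁ θ` lies in a convex set containing the ball of radius `r₀`, then so
does `d₂ u` for each unit vector `u` at angle at most `alphaAngle r₀ d₁ d₂` from `θ`. -/
lemma smul_mem_of_angle_le {E : Type*} [NormedAddCommGroup E] [InnerProductSpace ℝ E] {C : Set E}
    (hC : Convex ℝ C) {r₀ d₁ d₂ : ℝ} (h₀ : 0 < r₀) (h₂ : r₀ < d₂) (h₁ : d₂ < d₁)
    (hball : closedBall (0 : E) r₀ ⊆ C) {u θ : E} (hu : ‖u‖ = 1) (hθ : ‖θ‖ = 1)
    (hθC : d₁ • θ ∈ C) (hang : InnerProductGeometry.angle u θ ≤ alphaAngle r₀ d₁ d₂) :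
    d₂ • u ∈ C := by
  have hcos : Real.cos (alphaAngle r₀ d₁ d₂) ≤ inner ℝ u θ := by
    have h := Real.cos_le_cos_of_nonneg_of_le_pi (InnerProductGeometry.angle_nonneg u θ)
      ((Real.arcsin_le_pi_div_two _).trans (by linarith [Real.pi_pos])) hang
    rwa [InnerProductGeometry.cos_angle, hu, hθ, mul_one, div_one] at h
  rw [cos_alphaAngle h₀ h₂ h₁] at hcos
  have hA := Real.sq_sqrt (show 0 ≤ d₁ ^ 2 - r₀ ^ 2 by nlinarith)
  have hB := Real.sq_sqrt (show 0 ≤ d₂ ^ 2 - r₀ ^ 2 by nlinarith)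
  have hB0 := Real.sqrt_nonneg (d₂ ^ 2 - r₀ ^ 2)
  have hBA : Real.sqrt (d₂ ^ 2 - r₀ ^ 2) < Real.sqrt (d₁ ^ 2 - r₀ ^ 2) :=
    Real.sqrt_lt_sqrt (by nlinarith) (by nlinarith)
  generalize Real.sqrt (d₁ ^ 2 - r₀ ^ 2) = A at *
  generalize Real.sqrt (d₂ ^ 2 - r₀ ^ 2) = B at *
  have hA0 : 0 < A := by linarith
  have p1 : 0 < d₁ := by linarith
  have p2 : 0 < d₂ := by linarith
  rw [div_le_iff₀ (by positivity)] at hcos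
  obtain ⟨s, hs⟩ : ∃ s, s = B / A := ⟨_, rfl⟩
  have hs0 : 0 ≤ s := hs ▸ by positivity
  have hs1 : s < 1 := hs ▸ (div_lt_one hA0).2 hBA
  have hBs : B = s * A := by rw [hs]; field_simp
  have hnorm : ‖d₂ • u - (s * d₁) • θ‖ ≤ (1 - s) * r₀ := by
    apply le_of_sq_le_sq _ (by nlinarith)
    rw [norm_sub_sq_real, norm_smul, norm_smul, hu, hθ, real_inner_smul_left, real_inner_smul_right,
      Real.norm_of_nonneg p2.le, Real.norm_of_nonneg (by positivity)]
    have := mul_le_mul_of_nonneg_left hcos hs0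
    subst hBs
    linear_combination 2 * this - hB - s ^ 2 * hA
  have hw : (1 - s)⁻¹ • (d₂ • u - (s * d₁) • θ) ∈ C := by
    apply hball
    have : 0 < 1 - s := by linarith
    rw [mem_closedBall_zero_iff, norm_smul, Real.norm_of_nonneg (by positivity),
      inv_mul_le_iff₀ this]
    exact hnorm
  have := hC hθC hw hs0 (sub_nonneg.2 hs1.le) (by ring)
  rwa [smul_inv_smul₀ (by linarith), smul_smul, add_sub_cancel] at this

/-- Polar coordinates: the integral of a radial function over a set containing the cone of radius `d`
over `Ω` is at least the surface measure of `Ω` times the radial integral. -/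
lemma toSphere_mul_lintegral_le {E : Type*} [NormedAddCommGroup E] [NormedSpace ℝ E]
    [MeasurableSpace E] [BorelSpace E] [FiniteDimensional ℝ E] (μ : Measure E)
    [μ.IsAddHaarMeasure] {C : Set E} (hC : MeasurableSet C) {Ω : Set (sphere (0 : E) 1)}
    (hΩ : MeasurableSet Ω) (d : ℝ) (h : ∀ u ∈ Ω, ∀ r ∈ Set.Ioc 0 d, r • (u : E) ∈ C)
    {g : ℝ → ENNReal} (hg : Measurable g) :
    μ.toSphere Ω * ∫⁻ r in Set.Ioc 0 d, ENNReal.ofReal (r ^ (Module.finrank ℝ E - 1)) * g r ≤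
      ∫⁻ x in C, g ‖x‖ ∂μ := by
  have hradial : ∫⁻ r in Set.Ioc 0 d, ENNReal.ofReal (r ^ (Module.finrank ℝ E - 1)) * g r =
      ∫⁻ r : Set.Ioi (0 : ℝ), (Set.Iic d).indicator g r
        ∂Measure.volumeIoiPow (Module.finrank ℝ E - 1) := by
    rw [Measure.volumeIoiPow, lintegral_withDensity_eq_lintegral_mul _ (by fun_prop)
      (g := fun r : Set.Ioi (0 : ℝ) => (Set.Iic d).indicator g r)
      ((hg.indicator measurableSet_Iic).comp measurable_subtype_coe)]
    simp only [Pi.mul_apply]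
    rw [lintegral_subtype_comap measurableSet_Ioi fun r : ℝ =>
      ENNReal.ofReal (r ^ (Module.finrank ℝ E - 1)) * (Set.Iic d).indicator g r]
    rw [← Set.Ioi_inter_Iic, Set.inter_comm, ← Measure.restrict_restrict measurableSet_Iic,
      ← lintegral_indicator measurableSet_Iic]
    congr with r
    by_cases hr : r ≤ d <;> simp [Set.indicator, hr]
  calc _ = ∫⁻ p : sphere (0 : E) 1 × Set.Ioi (0 : ℝ),
        Ω.indicator 1 p.1 * (Set.Iic d).indicator g p.2
        ∂μ.toSphere.prod (Measure.volumeIoiPow (Module.finrank ℝ E - 1)) := by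
        rw [hradial, lintegral_prod_mul (f := Ω.indicator 1)
          (g := fun r : Set.Ioi (0 : ℝ) => (Set.Iic d).indicator g r)
          (aemeasurable_one.indicator hΩ)
          ((hg.indicator measurableSet_Iic).comp measurable_subtype_coe).aemeasurable,
          lintegral_indicator_one hΩ]
    _ = ∫⁻ x : ({0}ᶜ : Set E), Ω.indicator 1 (homeomorphUnitSphereProd E x).1 *
          (Set.Iic d).indicator g (homeomorphUnitSphereProd E x).2 ∂(μ.comap (↑)) := by
        rw [← μ.measurePreserving_homeomorphUnitSphereProd.lintegral_comp_emb
          (Homeomorph.measurableEmbedding _)]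
    _ ≤ ∫⁻ x : ({0}ᶜ : Set E), C.indicator (fun y => g ‖y‖) x ∂(μ.comap (↑)) := by
        refine lintegral_mono fun x => ?_
        by_cases hx : (homeomorphUnitSphereProd E x).1 ∈ Ω
        · by_cases hxd : ‖(x : E)‖ ≤ d
          · have hx0 : ‖(x : E)‖ ≠ 0 := norm_ne_zero_iff.2 x.2
            have hxC : (x : E) ∈ C := by
              have := h _ hx ‖(x : E)‖ ⟨norm_pos_iff.2 x.2, hxd⟩
              rwa [homeomorphUnitSphereProd_apply_fst_coe, smul_inv_smul₀ hx0] at this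
            simp [hx, hxd, hxC]
          · simp [hxd]
        · simp [hx]
    _ = ∫⁻ x in C, g ‖x‖ ∂μ.restrict {0}ᶜ := by
        rw [lintegral_subtype_comap (measurableSet_singleton _).compl
          (C.indicator fun y => g ‖y‖), lintegral_indicator hC]
    _ ≤ _ := lintegral_mono' (Measure.restrict_mono_measure Measure.restrict_le_self _) le_rfl

lemma hasDerivAt_tanh (t : ℝ) : HasDerivAt Real.tanh (1 / Real.cosh t ^ 2) t := by
  have h := (Real.hasDerivAt_sinh t).div (Real.hasDerivAt_cosh t) (Real.cosh_pos t).ne'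
  rw [← sq, ← sq, Real.cosh_sq_sub_sinh_sq] at h
  exact h.congr_of_eventuallyEq (.of_forall Real.tanh_eq_sinh_div_cosh)

/-- The substitution `r = tanh t` in the radial part of the hyperbolic volume. -/
lemma integral_sinh_pow_eq (n : ℕ) (hn : 1 ≤ n) {d : ℝ} (hd0 : 0 ≤ d) (hd1 : d < 1) :
    ∫ t in (0 : ℝ)..artanh d, Real.sinh t ^ (n - 1) =
      ∫ r in (0 : ℝ)..d, r ^ (n - 1) * (1 - r ^ 2) ^ (-(((n : ℝ) + 1) / 2)) := by
  have hart : artanh d = Real.artanh d := by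
    rw [artanh, Real.artanh_eq_half_log ⟨by linarith, hd1.le⟩]; ring
  have htanh : Real.tanh (artanh d) = d := by
    rw [hart, Real.tanh_artanh ⟨by linarith, hd1⟩]
  have hsub := intervalIntegral.integral_comp_mul_deriv' (a := 0) (b := artanh d)
    (f := Real.tanh) (f' := fun t => 1 / Real.cosh t ^ 2)
    (g := fun r => r ^ (n - 1) * (1 - r ^ 2) ^ (-(((n : ℝ) + 1) / 2)))
    (fun t _ => hasDerivAt_tanh t)
    (Continuous.continuousOn <| continuous_const.div (by fun_prop)
      fun t => pow_ne_zero _ (Real.cosh_pos t).ne')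
    (by
      rintro _ ⟨t, -, rfl⟩
      have : 0 < 1 - Real.tanh t ^ 2 := by
        have := Real.abs_tanh_lt_one t
        have := (sq_lt_one_iff_abs_lt_one _).2 this
        linarith
      apply ContinuousAt.continuousWithinAt
      exact (by fun_prop : ContinuousAt (fun r : ℝ => r ^ (n - 1)) _).mul
        (ContinuousAt.rpow_const (by fun_prop) (Or.inl this.ne')))
  rw [htanh, Real.tanh_zero] at hsub
  rw [← hsub]
  congr with t
  have hc := Real.cosh_pos t
  have h1 : 1 - Real.tanh t ^ 2 = Real.cosh t ^ (-2 : ℝ) := by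
    rw [Real.tanh_eq_sinh_div_cosh, Real.rpow_neg hc.le, Real.rpow_two]
    field_simp
    exact Real.cosh_sq_sub_sinh_sq t
  have h2 : (1 - Real.tanh t ^ 2) ^ (-(((n : ℝ) + 1) / 2)) = Real.cosh t ^ (n + 1) := by
    rw [h1, ← Real.rpow_mul hc.le, ← Real.rpow_natCast]
    congr 1
    push_cast
    ring
  obtain ⟨m, rfl⟩ : ∃ m, n = m + 1 := ⟨n - 1, by omega⟩
  simp only [Function.comp_apply, h2]
  simp only [Real.tanh_eq_sinh_div_cosh, Nat.add_sub_cancel, div_pow]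
  field_simp
  ring

/-- Lemma `Kmeasgen`: the measure of the angular `α_{r₀}(d₁, d₂)`-neighborhood `N` of
`Ω_{d₁}(C)` satisfies `σ(N) · ∫₀^{artanh d₂} sinh^{n-1} t dt ≤ hvol(C)`. -/
theorem Kmeasgen (n : ℕ) (hn : 2 ≤ n) (C : Set (EuclideanSpace ℝ (Fin n)))
    (hCconv : Convex ℝ C) (hCsub : C ⊆ ball (0 : EuclideanSpace ℝ (Fin n)) 1)
    (hCrelcl : C = closure C ∩ ball (0 : EuclideanSpace ℝ (Fin n)) 1)
    (r₀ d₁ d₂ : ℝ) (h₀ : 0 < r₀) (h₂ : r₀ < d₂) (h₁ : d₂ < d₁) (hd₁ : d₁ < 1)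
    (hball : closedBall (0 : EuclideanSpace ℝ (Fin n)) r₀ ⊆ C) :
    (volume : Measure (EuclideanSpace ℝ (Fin n))).toSphere
        {u : sphere (0 : EuclideanSpace ℝ (Fin n)) 1 |
          ∃ θ : EuclideanSpace ℝ (Fin n), ‖θ‖ = 1 ∧ d₁ • θ ∈ C ∧
            InnerProductGeometry.angle (u : EuclideanSpace ℝ (Fin n)) θ ≤ alphaAngle r₀ d₁ d₂}
      * ENNReal.ofReal (∫ t in (0:ℝ)..artanh d₂, Real.sinh t ^ (n - 1)) ≤ hvol n C := by
  have hd₂0 : 0 < d₂ := h₀.trans h₂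
  have hd₂1 : d₂ < 1 := h₁.trans hd₁
  have hCmeas : MeasurableSet C := by
    rw [hCrelcl]
    exact isClosed_closure.measurableSet.inter measurableSet_ball
  have h0C : (0 : EuclideanSpace ℝ (Fin n)) ∈ C := hball (mem_closedBall_self h₀.le)
  have hrad : ENNReal.ofReal (∫ t in (0:ℝ)..artanh d₂, Real.sinh t ^ (n - 1)) =
      ∫⁻ r in Set.Ioc 0 d₂, ENNReal.ofReal
        (r ^ (Module.finrank ℝ (EuclideanSpace ℝ (Fin n)) - 1)) *
        ENNReal.ofReal ((1 - r ^ 2) ^ (-(((n : ℝ) + 1) / 2))) := by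
    rw [integral_sinh_pow_eq n (by omega) hd₂0.le hd₂1, intervalIntegral.integral_of_le hd₂0.le,
      finrank_euclideanSpace_fin, ofReal_integral_eq_lintegral_ofReal]
    · refine setLIntegral_congr_fun measurableSet_Ioc fun r hr => ?_
      exact ENNReal.ofReal_mul (pow_nonneg hr.1.le _)
    · rw [← IntegrableOn, ← intervalIntegrable_iff_integrableOn_Ioc_of_le hd₂0.le]
      apply ContinuousOn.intervalIntegrable
      rw [Set.uIcc_of_le hd₂0.le]
      intro r hr
      have : 0 < 1 - r ^ 2 := by nlinarith [hr.1, hr.2]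
      apply ContinuousAt.continuousWithinAt
      exact (by fun_prop : ContinuousAt (fun r : ℝ => r ^ (n - 1)) _).mul
        (ContinuousAt.rpow_const (by fun_prop) (Or.inl this.ne'))
    · filter_upwards [ae_restrict_mem measurableSet_Ioc] with r hr
      have : 0 ≤ 1 - r ^ 2 := by nlinarith [hr.1, hr.2]
      exact mul_nonneg (pow_nonneg hr.1.le _) (Real.rpow_nonneg this _)
  rw [hrad]
  refine le_trans ?_ (toSphere_mul_lintegral_le volume hCmeas
    (Ω := {u | d₂ • (u : EuclideanSpace ℝ (Fin n)) ∈ C})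
    (hCmeas.preimage (by fun_prop)) d₂ (fun u hu r hr => ?_)
    (g := fun r => ENNReal.ofReal ((1 - r ^ 2) ^ (-(((n : ℝ) + 1) / 2)))) (by fun_prop))
  · refine mul_le_mul' (measure_mono ?_) le_rfl
    rintro u ⟨θ, hθ, hθC, hang⟩
    exact smul_mem_of_angle_le hCconv h₀ h₂ h₁ hball (mem_sphere_zero_iff_norm.1 u.2) hθ hθC hang
  · have := hCconv.smul_mem_of_zero_mem h0C hu (t := r / d₂)
      ⟨div_nonneg hr.1.le hd₂0.le, (div_le_one hd₂0).2 hr.2⟩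
    rwa [smul_smul, div_mul_cancel₀ _ hd₂0.ne'] at this
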